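/- arXiv:2512.16486 — 2 statements merged into one kernel-verified Lean document; each statement's English description precedes it below -/
import Mathlib

section
/- Compatibility (specification) property of FK measures. Let (V, E, ends, α) be a finite graph with boundary condition, p ∈ (0,1), q > 0. Let F ⊆ E and η : E∖F → Bool. Let α(η) denote the equivalence relation on V generated by α together with all pairs of endpoints of edges e' ∈ E∖F with η e' = true. Then for every σ : F → Bool, φ^α_{(V,E),p,q}({ω : ω|_F = σ and ω|_{E∖F} = η}) = φ^α_{(V,E),p,q}({ω : ω|_{E∖F} = η}) · φ^{α(η)}_{(V,F),p,q}({σ}), where φ^{α(η)}_{(V,F),p,q} is the FK measure of the graph with vertex type V, edge type F (with the restricted endpoint map) and wiring α(η). -/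
open scoped Classical

noncomputable section

namespace FKPaper

variable {V E : Type*}

/-- One-step adjacency between wired vertices through an edge in `F`. -/
def Step (ends : E → Sym2 V) (α : Setoid V) (F : Set E) (x y : Quotient α) : Prop :=
  ∃ e ∈ F, Sym2.map (Quotient.mk α) (ends e) = s(x, y)

/-- Setoid of connected components of the wired multigraph with edge set `F`. -/
def connSetoid (ends : E → Sym2 V) (α : Setoid V) (F : Set E) : Setoid (Quotient α) :=
  Relation.EqvGen.setoid (Step ends α F)

/-- Connectivity in the wired multigraph with edge set `F`. -/
def Conn (ends : E → Sym2 V) (α : Setoid V) (F : Set E) (x y : Quotient α) : Prop :=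
  (connSetoid ends α F).r x y

/-- The two endpoints of `e` are joined in the wired multigraph with edge set `F`. -/
def EndsConn (ends : E → Sym2 V) (α : Setoid V) (F : Set E) (e : E) : Prop :=
  ∀ x y : V, ends e = s(x, y) → Conn ends α F (Quotient.mk α x) (Quotient.mk α y)

/-- Number of connected components `k(ω, α)`. -/
def numComponents (ends : E → Sym2 V) (α : Setoid V) (ω : E → Bool) : ℕ :=
  Nat.card (Quotient (connSetoid ends α {e | ω e = true}))

/-- `p' = p / (p + q (1 - p))`. -/
def pPrime (p q : ℝ) : ℝ := p / (p + q * (1 - p))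

/-- Total mass of a set under a weight function. -/
def massOf {ι : Type*} [Fintype ι] (w : ι → ℝ) (A : Set ι) : ℝ :=
  ∑ x ∈ Finset.univ.filter (· ∈ A), w x

/-- Normalized probability of a set under a weight function. -/
def probOf {ι : Type*} [Fintype ι] (w : ι → ℝ) (A : Set ι) : ℝ :=
  massOf w A / massOf w Set.univ

/-- FK weight of a configuration. -/
def fkWeight [Fintype E] (ends : E → Sym2 V) (α : Setoid V) (p q : ℝ) (ω : E → Bool) : ℝ :=
  p ^ (Finset.univ.filter fun e => ω e = true).card *
    (1 - p) ^ (Finset.univ.filter fun e => ω e = false).card *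
    q ^ numComponents ends α ω

/-- The FK (random cluster) probability measure `φ^α_{G,p,q}`. -/
def fkProb [Fintype E] (ends : E → Sym2 V) (α : Setoid V) (p q : ℝ)
    (A : Set (E → Bool)) : ℝ :=
  probOf (fkWeight ends α p q) A

/-- Inhomogeneous Bernoulli weight. -/
def berWeight [Fintype E] (pe : E → ℝ) (ω : E → Bool) : ℝ :=
  ∏ e, if ω e = true then pe e else 1 - pe e

/-- Inhomogeneous Bernoulli product measure `P_{(p_e)}`. -/
def berProb [Fintype E] (pe : E → ℝ) (A : Set (E → Bool)) : ℝ :=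
  probOf (berWeight pe) A

/-- Increasing sets of configurations. -/
def Increasing (A : Set (E → Bool)) : Prop :=
  ∀ ⦃ω ω' : E → Bool⦄, ω ∈ A → (∀ e, ω e ≤ ω' e) → ω' ∈ A

/-- Stochastic domination `μ ≼ ν`. -/
def StochDom [Fintype E] (μ ν : Set (E → Bool) → ℝ) : Prop :=
  ∀ A : Set (E → Bool), Increasing A → μ A ≤ ν A

/-- `Q_F(e)`: cutsets for `e` included in `F`. -/
def Cutsets (ends : E → Sym2 V) (α : Setoid V) (F : Set E) (e : E) : Set (Set E) :=
  {χ | χ ⊆ F ∧ ¬ EndsConn ends α {e' | e' ∉ χ ∧ e' ≠ e} e}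


/-- `α(η)`: the equivalence relation on `V` generated by `α` together with the pairs of
endpoints of the edges outside `F` that are open in `η`. -/
def wireSetoid (ends : E → Sym2 V) (α : Setoid V) (F : Set E) (η : E → Bool) : Setoid V :=
  Relation.EqvGen.setoid
    (fun x y => α.r x y ∨ ∃ e, e ∉ F ∧ η e = true ∧ ends e = s(x, y))

/-- Vertex-level version of the connectivity setoid. -/
def vSetoid (ends : E → Sym2 V) (α : Setoid V) (S : Set E) : Setoid V :=
  Relation.EqvGen.setoid (fun x y => α.r x y ∨ ∃ e ∈ S, ends e = s(x, y))

theorem eqvGen_setoid_le {X : Type*} {r : X → X → Prop} (s : Setoid X)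
    (h : ∀ x y, r x y → s x y) : Relation.EqvGen.setoid r ≤ s := by
  intro x y hxy
  have hxy' : Relation.EqvGen r x y := hxy
  induction hxy' with
  | rel x y h' => exact h x y h'
  | refl x => exact s.refl x
  | symm x y h1 ih => exact s.symm (ih h1)
  | trans x y z h1 h2 ih1 ih2 => exact s.trans (ih1 h1) (ih2 h2)

theorem vSetoid_iff (ends : E → Sym2 V) (α : Setoid V) (S : Set E) (x y : V) :
    vSetoid ends α S x y ↔ connSetoid ends α S (Quotient.mk α x) (Quotient.mk α y) := by
  constructor
  · intro h
    have key : vSetoid ends α S ≤ (connSetoid ends α S).comap (Quotient.mk α) := by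
      apply eqvGen_setoid_le
      rintro a b (hab | ⟨e, he, hab⟩)
      · rw [Setoid.comap_rel, Quotient.sound (s := α) hab]
      · rw [Setoid.comap_rel]
        exact Relation.EqvGen.rel _ _ ⟨e, he, by rw [hab]; rfl⟩
    exact key h
  · intro h
    let f : Quotient α → Quotient (vSetoid ends α S) :=
      Quotient.lift (fun v => Quotient.mk (vSetoid ends α S) v) (fun a b hab =>
        Quotient.sound (Relation.EqvGen.rel _ _ (Or.inl hab)))
    have key : connSetoid ends α S ≤ Setoid.ker f := by
      apply eqvGen_setoid_le
      rintro a b ⟨e, he, hab⟩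
      rw [Setoid.ker_def]
      have h1 : ∀ z : Sym2 V, ends e = z → Sym2.map (Quotient.mk α) z = s(a, b) → f a = f b := by
        intro z
        induction z using Sym2.ind with
        | _ u v =>
          intro hz huv
          have hw : Quotient.mk (vSetoid ends α S) u = Quotient.mk (vSetoid ends α S) v :=
            Quotient.sound (Relation.EqvGen.rel _ _ (Or.inr ⟨e, he, hz⟩))
          rw [Sym2.map_mk, Sym2.eq_iff] at huv
          rcases huv with ⟨rfl, rfl⟩ | ⟨rfl, rfl⟩
          · exact hw
          · exact hw.symm
      exact h1 _ rfl hab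
    have := key h
    rw [Setoid.ker_def] at this
    exact Quotient.exact (s := vSetoid ends α S) this

theorem numComponents_eq (ends : E → Sym2 V) (α : Setoid V) (ω : E → Bool) :
    numComponents ends α ω = Nat.card (Quotient (vSetoid ends α {e | ω e = true})) := by
  symm
  unfold numComponents
  refine Nat.card_eq_of_bijective
    (Quotient.lift (fun v => Quotient.mk (connSetoid ends α {e | ω e = true}) (Quotient.mk α v))
      (fun a b hab => Quotient.sound ((vSetoid_iff ends α _ a b).1 hab))) ⟨?_, ?_⟩
  · intro a b
    induction a using Quotient.ind
    induction b using Quotient.ind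
    intro h
    exact Quotient.sound ((vSetoid_iff ends α _ _ _).2 (Quotient.exact h))
  · intro a
    induction a using Quotient.ind with
    | _ a =>
      induction a using Quotient.ind with
      | _ a => exact ⟨Quotient.mk _ a, rfl⟩

/-- Glue a configuration on `F` with the exterior configuration `η`. -/
def glue (F : Set E) (η : E → Bool) (τ : ↥F → Bool) : E → Bool :=
  fun e => if h : e ∈ F then τ ⟨e, h⟩ else η e

theorem glue_mem (F : Set E) (η : E → Bool) (τ : ↥F → Bool) (e : ↥F) :
    glue F η τ e.1 = τ e := by simp [glue]

theorem glue_not_mem (F : Set E) (η : E → Bool) (τ : ↥F → Bool) (e : E) (h : e ∉ F) :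
    glue F η τ e = η e := by simp [glue, h]

theorem glue_injective (F : Set E) (η : E → Bool) : Function.Injective (glue F η) := by
  intro a b h
  funext e
  rw [← glue_mem F η a, h, glue_mem]

theorem glue_eq (F : Set E) (η : E → Bool) (τ : ↥F → Bool) (ω : E → Bool)
    (h1 : ∀ e : ↥F, ω e.1 = τ e) (h2 : ∀ e ∉ F, ω e = η e) : ω = glue F η τ := by
  funext e
  by_cases h : e ∈ F
  · rw [glue_mem F η τ ⟨e, h⟩]; exact h1 ⟨e, h⟩
  · rw [glue_not_mem F η τ e h]; exact h2 e h

theorem vSetoid_glue (ends : E → Sym2 V) (α : Setoid V) (F : Set E) (η : E → Bool)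
    (τ : ↥F → Bool) :
    vSetoid ends α {e | glue F η τ e = true} =
      vSetoid (fun e : ↥F => ends e.1) (wireSetoid ends α F η) {e | τ e = true} := by
  apply le_antisymm
  · apply eqvGen_setoid_le
    rintro a b (hab | ⟨e, he, hab⟩)
    · exact Relation.EqvGen.rel _ _ (Or.inl (Relation.EqvGen.rel _ _ (Or.inl hab)))
    · have he' : glue F η τ e = true := he
      by_cases h : e ∈ F
      · rw [glue_mem F η τ ⟨e, h⟩] at he'
        exact Relation.EqvGen.rel _ _ (Or.inr ⟨⟨e, h⟩, he', hab⟩)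
      · rw [glue_not_mem F η τ e h] at he'
        exact Relation.EqvGen.rel _ _
          (Or.inl (Relation.EqvGen.rel _ _ (Or.inr ⟨e, h, he', hab⟩)))
  · apply eqvGen_setoid_le
    rintro a b (hab | ⟨e, he, hab⟩)
    · have key : wireSetoid ends α F η ≤ vSetoid ends α {e | glue F η τ e = true} := by
        apply eqvGen_setoid_le
        rintro a b (hab | ⟨e, h, he, hab⟩)
        · exact Relation.EqvGen.rel _ _ (Or.inl hab)
        · exact Relation.EqvGen.rel _ _ (Or.inr ⟨e, (glue_not_mem F η τ e h).trans he, hab⟩)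
      exact key hab
    · exact Relation.EqvGen.rel _ _ (Or.inr ⟨e.1, (glue_mem F η τ e).trans he, hab⟩)

theorem numComponents_glue (ends : E → Sym2 V) (α : Setoid V) (F : Set E) (η : E → Bool)
    (τ : ↥F → Bool) :
    numComponents ends α (glue F η τ) =
      numComponents (fun e : ↥F => ends e.1) (wireSetoid ends α F η) τ := by
  rw [numComponents_eq, numComponents_eq, vSetoid_glue]

theorem fkWeight_eq_prod [Fintype E] (ends : E → Sym2 V) (α : Setoid V) (p q : ℝ)
    (ω : E → Bool) :
    fkWeight ends α p q ω =
      (∏ e, if ω e = true then p else 1 - p) * q ^ numComponents ends α ω := by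
  unfold fkWeight
  rw [Finset.prod_ite, Finset.prod_const, Finset.prod_const]
  simp only [Bool.not_eq_true]

theorem fkWeight_glue [Fintype E] (F : Set E) [Fintype ↥F] (ends : E → Sym2 V) (α : Setoid V)
    (p q : ℝ) (η : E → Bool) (τ : ↥F → Bool) :
    fkWeight ends α p q (glue F η τ) =
      (∏ e : {e // e ∉ F}, if η e.1 = true then p else 1 - p) *
        fkWeight (fun e : ↥F => ends e.1) (wireSetoid ends α F η) p q τ := by
  rw [fkWeight_eq_prod, fkWeight_eq_prod, numComponents_glue]
  have h0 : (∏ e, if glue F η τ e = true then p else 1 - p) =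
      (∏ e : {e // e ∈ F}, if glue F η τ e.1 = true then p else 1 - p) *
        ∏ e : {e // e ∉ F}, if glue F η τ e.1 = true then p else 1 - p := by
    rw [← Fintype.prod_subtype_mul_prod_subtype (fun e => e ∈ F)]
    congr!
  have h1 : (∏ e : {e // e ∈ F}, if glue F η τ e.1 = true then p else 1 - p) =
      ∏ e : ↥F, if τ e = true then p else 1 - p := by
    refine Fintype.prod_equiv (Equiv.refl _) _ _ (fun e => ?_)
    rw [glue_mem F η τ e]; rfl
  have h2 : (∏ e : {e // e ∉ F}, if glue F η τ e.1 = true then p else 1 - p) =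
      ∏ e : {e // e ∉ F}, if η e.1 = true then p else 1 - p :=
    Finset.prod_congr rfl (fun e _ => by rw [glue_not_mem F η τ e.1 e.2])
  rw [h0, h1, h2]
  ring

theorem fkWeight_pos [Fintype E] (ends : E → Sym2 V) (α : Setoid V) (p q : ℝ)
    (hp : p ∈ Set.Ioo (0 : ℝ) 1) (hq : 0 < q) (ω : E → Bool) :
    0 < fkWeight ends α p q ω := by
  have h1 := hp.1
  have h2 : 0 < 1 - p := sub_pos.2 hp.2
  unfold fkWeight
  positivity

theorem massOf_singleton {ι : Type*} {_ : Fintype ι} (w : ι → ℝ) (a : ι) :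
    massOf w {a} = w a := by
  unfold massOf
  rw [Finset.sum_eq_single a]
  · intro b hb hne
    exact absurd (by simpa using hb) hne
  · intro h
    exact absurd (by simp) h

theorem massOf_range {ι κ : Type*} [Fintype ι] [Fintype κ] (w : ι → ℝ) (g : κ → ι)
    (hg : Function.Injective g) : massOf w (Set.range g) = ∑ k, w (g k) := by
  unfold massOf
  symm
  refine Finset.sum_bij (fun k _ => g k) ?_ ?_ ?_ ?_
  · intro a _; simp
  · intro a _ b _ h; exact hg h
  · intro b hb
    obtain ⟨k, hk⟩ : b ∈ Set.range g := by simpa using hb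
    exact ⟨k, Finset.mem_univ _, hk⟩
  · intro a _; rfl

theorem massOf_univ {ι : Type*} {_ : Fintype ι} (w : ι → ℝ) :
    massOf w Set.univ = ∑ k, w k := by
  simp [massOf]

theorem probOf_core {ι κ : Type*} {_ : Fintype ι} {_ : Fintype κ} (w : ι → ℝ) (v : κ → ℝ)
    (hv : ∀ k, 0 < v k) (g : κ → ι) (hg : Function.Injective g) (C : ℝ)
    (h : ∀ k, w (g k) = C * v k) (k : κ) :
    probOf w {g k} = probOf w (Set.range g) * probOf v {k} := by
  unfold probOf
  rw [massOf_singleton, massOf_singleton, massOf_range w g hg, massOf_univ v]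
  simp only [h]
  rw [← Finset.mul_sum]
  have hpos : 0 < ∑ k, v k := Finset.sum_pos (fun k _ => hv k) ⟨k, Finset.mem_univ k⟩
  field_simp

/-- **Compatibility (specification) property of FK measures.** -/
theorem fk_compatibility
    {V E : Type*} [Fintype V] [Fintype E]
    (ends : E → Sym2 V) (α : Setoid V)
    (p q : ℝ) (hp : p ∈ Set.Ioo (0 : ℝ) 1) (hq : 0 < q)
    (F : Set E) (η : E → Bool) (σ : ↥F → Bool) :
    fkProb ends α p q
        {ω | (∀ e : ↥F, ω e.1 = σ e) ∧ ∀ e ∉ F, ω e = η e}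
      = fkProb ends α p q {ω | ∀ e ∉ F, ω e = η e}
        * fkProb (fun e : ↥F => ends e.1) (wireSetoid ends α F η) p q {σ} := by
  have hA : {ω : E → Bool | (∀ e : ↥F, ω e.1 = σ e) ∧ ∀ e ∉ F, ω e = η e} = {glue F η σ} := by
    ext ω
    constructor
    · rintro ⟨h1, h2⟩; exact glue_eq F η σ ω h1 h2
    · intro h
      have h' : ω = glue F η σ := h
      subst h'
      exact ⟨glue_mem F η σ, glue_not_mem F η σ⟩
  have hB : {ω : E → Bool | ∀ e ∉ F, ω e = η e} = Set.range (glue F η) := by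
    ext ω
    constructor
    · intro h
      exact ⟨fun e => ω e.1, (glue_eq F η (fun e => ω e.1) ω (fun _ => rfl) h).symm⟩
    · rintro ⟨τ, rfl⟩
      exact glue_not_mem F η τ
  rw [hA, hB]
  exact probOf_core _ _ (fkWeight_pos _ _ p q hp hq) _ (glue_injective F η) _
    (fkWeight_glue F ends α p q η) σ
end FKPaper
end
end

section
/- Finite-volume comparison of FK measures with different boundary conditions (inequality (2.3) of the uniqueness proof). Let (V, E, ends, α) be a finite graph with boundary condition, p ∈ (0,1), q > 0. Let V_Λ ⊆ V_Δ ⊆ V with V_Λ nonempty, let E_Δ := {e ∈ E : both endpoints of e lie in V_Δ}, let E_Λ := {e ∈ E : both endpoints of e lie in V_Λ}, let ∂V_Δ := {x ∈ V_Δ : x is an endpoint of an edge of E with an endpoint outside V_Δ} and similarly ∂V_Λ, and let β be an equivalence relation on V_Δ. Assume every nontrivial class of α contains no vertex of V_Δ∖∂V_Δ, and every nontrivial class of β is contained in ∂V_Δ. Then for every set A of functions E_Λ → Bool, |φ^α_{(V,E),p,q}({ω : ω|_{E_Λ} ∈ A}) − φ^β_{(V_Δ,E_Δ),p,q}({ω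 : ω|_{E_Λ} ∈ A})| ≤ P_{max(p,p')}({ω : some vertex of ∂V_Λ is joined to some vertex of ∂V_Δ by a path of ω-open edges of E_Δ}). -/
open scoped Classical

noncomputable section

namespace FKPaper

variable {V E : Type*}

/-- Edges whose both endpoints lie in `W`. -/
def edgesIn (ends : E → Sym2 V) (W : Set V) : Set E :=
  {e | ∀ x ∈ ends e, x ∈ W}

/-- The boundary `∂W`: vertices of `W` incident to an edge with an endpoint outside `W`. -/
def bdry (ends : E → Sym2 V) (W : Set V) : Set V :=
  {x | x ∈ W ∧ ∃ e : E, x ∈ ends e ∧ ∃ y ∈ ends e, y ∉ W}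

/-- Vertex-level connectivity using only edges of `F` (no wiring). -/
def VConn (ends : E → Sym2 V) (F : Set E) (x y : V) : Prop :=
  Relation.ReflTransGen (fun a b => ∃ e ∈ F, ends e = s(a, b)) x y

/-! ### Counting components when adding one edge -/

section Helpers

/-- General FK weight using only the edges of `S`. -/
def gW [Fintype E] (ends : E → Sym2 V) (α : Setoid V) (S : Set E) (p q : ℝ) (ω : E → Bool) : ℝ :=
  (∏ e, if e ∈ S then (if ω e = true then p else 1 - p) else 1) *
    q ^ Nat.card (Quotient (connSetoid ends α {e | e ∈ S ∧ ω e = true}))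

theorem card_merge {X : Type*} [Finite X] (s t : Setoid X) (a b : X)
    (hab : ¬ s.r a b)
    (ht : ∀ x y, t.r x y ↔ (s.r x y ∨ (s.r x a ∧ s.r y b) ∨ (s.r x b ∧ s.r y a))) :
    Nat.card (Quotient s) = Nat.card (Quotient t) + 1 := by
  have h1 : Nat.card {c : Quotient s // c ≠ Quotient.mk s b} = Nat.card (Quotient t) := by
    let f : Quotient s → Quotient t := Quotient.map' id (fun x y h => (ht x y).2 (Or.inl h))
    have hf : ∀ x, f (Quotient.mk s x) = Quotient.mk t x := fun x => rfl
    apply Nat.card_eq_of_bijective (fun c => f c.1)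
    constructor
    · rintro ⟨c, hc⟩ ⟨d, hd⟩ h
      induction c using Quotient.inductionOn with | _ x => ?_
      induction d using Quotient.inductionOn with | _ y => ?_
      have h' : t.r x y := Quotient.exact h
      have hx : ¬ s.r x b := fun h => hc (Quotient.sound h)
      have hy : ¬ s.r y b := fun h => hd (Quotient.sound h)
      have : s.r x y := by
        rcases (ht x y).1 h' with h | h | h
        · exact h
        · exact absurd h.2 hy
        · exact absurd h.1 hx
      exact Subtype.ext (Quotient.sound this)
    · intro d
      induction d using Quotient.inductionOn with | _ y => ?_
      by_cases hy : s.r y b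
      · refine ⟨⟨Quotient.mk s a, fun h => hab (Quotient.exact h)⟩, ?_⟩
        apply Quotient.sound
        exact (ht a y).2 (Or.inr (Or.inl ⟨s.refl a, hy⟩))
      · exact ⟨⟨Quotient.mk s y, fun h => hy (Quotient.exact h)⟩, rfl⟩
  rw [← h1]
  have : Fintype (Quotient s) := Fintype.ofFinite _
  rw [Nat.card_eq_fintype_card, Nat.card_eq_fintype_card]
  have := Fintype.card_subtype_compl (fun c : Quotient s => c = Quotient.mk s b)
  rw [Fintype.card_subtype_eq] at this
  have hpos : 0 < Fintype.card (Quotient s) := Fintype.card_pos_iff.2 ⟨Quotient.mk s b⟩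
  have e2 : Fintype.card {c : Quotient s // c ≠ Quotient.mk s b} =
    Fintype.card {c : Quotient s // ¬ c = Quotient.mk s b} := rfl
  omega

theorem conn_mono (ends : E → Sym2 V) (α : Setoid V) {F G : Set E} (h : F ⊆ G)
    {x y : Quotient α} (hc : Conn ends α F x y) : Conn ends α G x y := by
  have hc' : Relation.EqvGen (Step ends α F) x y := hc
  refine Relation.EqvGen.mono (fun a b => ?_) _ _ hc'
  rintro ⟨e, he, h'⟩
  exact ⟨e, h he, h'⟩

theorem conn_insert (ends : E → Sym2 V) (α : Setoid V) (F : Set E) (e : E) (a b : V)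
    (hab : ends e = s(a, b)) (x y : Quotient α) :
    Conn ends α (insert e F) x y ↔ (Conn ends α F x y ∨
      (Conn ends α F x (Quotient.mk α a) ∧ Conn ends α F y (Quotient.mk α b)) ∨
      (Conn ends α F x (Quotient.mk α b) ∧ Conn ends α F y (Quotient.mk α a))) := by
  have R : ∀ x, Conn ends α F x x := fun x => (connSetoid ends α F).refl x
  have S : ∀ {x y}, Conn ends α F x y → Conn ends α F y x :=
    fun h => (connSetoid ends α F).symm h
  have T : ∀ {x y z}, Conn ends α F x y → Conn ends α F y z → Conn ends α F x z :=
    fun h h' => (connSetoid ends α F).trans h h'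
  constructor
  · intro h
    have h' : Relation.EqvGen (Step ends α (insert e F)) x y := h
    clear h
    induction h' with
    | rel x y h =>
      obtain ⟨e', he', h⟩ := h
      rcases he' with rfl | he'
      · rw [hab, Sym2.map_mk, Sym2.eq_iff] at h
        rcases h with ⟨rfl, rfl⟩ | ⟨rfl, rfl⟩
        · exact Or.inr (Or.inl ⟨R _, R _⟩)
        · exact Or.inr (Or.inr ⟨R _, R _⟩)
      · exact Or.inl (Relation.EqvGen.rel _ _ ⟨e', he', h⟩)
    | refl x => exact Or.inl (R x)
    | symm x y _ ih =>
      rcases ih with h | h | h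
      · exact Or.inl (S h)
      · exact Or.inr (Or.inr ⟨h.2, h.1⟩)
      · exact Or.inr (Or.inl ⟨h.2, h.1⟩)
    | trans x y z _ _ ih1 ih2 =>
      rcases ih1 with h | h | h <;> rcases ih2 with k | k | k
      · exact Or.inl (T h k)
      · exact Or.inr (Or.inl ⟨T h k.1, k.2⟩)
      · exact Or.inr (Or.inr ⟨T h k.1, k.2⟩)
      · exact Or.inr (Or.inl ⟨h.1, T (S k) h.2⟩)
      · exact Or.inl (T (T h.1 (S k.1)) (T h.2 (S k.2)))
      · exact Or.inl (T h.1 (S k.2))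
      · exact Or.inr (Or.inr ⟨h.1, T (S k) h.2⟩)
      · exact Or.inl (T h.1 (S k.2))
      · exact Or.inl (T (T h.1 (S k.1)) (T h.2 (S k.2)))
  · have hs : F ⊆ insert e F := Set.subset_insert _ _
    have key : Conn ends α (insert e F) (Quotient.mk α a) (Quotient.mk α b) :=
      Relation.EqvGen.rel _ _ ⟨e, Set.mem_insert _ _, by rw [hab, Sym2.map_mk]⟩
    have S' : ∀ {x y}, Conn ends α (insert e F) x y → Conn ends α (insert e F) y x :=
      fun h => (connSetoid ends α (insert e F)).symm h
    have T' : ∀ {x y z}, Conn ends α (insert e F) x y → Conn ends α (insert e F) y z →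
        Conn ends α (insert e F) x z :=
      fun h h' => (connSetoid ends α (insert e F)).trans h h'
    rintro (h | h | h)
    · exact conn_mono ends α hs h
    · exact T' (T' (conn_mono ends α hs h.1) key) (S' (conn_mono ends α hs h.2))
    · exact T' (T' (conn_mono ends α hs h.1) (S' key)) (S' (conn_mono ends α hs h.2))

theorem gW_pos [Fintype E] (ends : E → Sym2 V) (α : Setoid V) (S : Set E) {p q : ℝ}
    (hp : p ∈ Set.Ioo (0 : ℝ) 1) (hq : 0 < q) (ω : E → Bool) : 0 < gW ends α S p q ω := by
  have h1 := hp.1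
  have h2 : 0 < 1 - p := by linarith [hp.2]
  unfold gW
  refine mul_pos (Finset.prod_pos fun e _ => ?_) (pow_pos hq _)
  split_ifs <;> first | assumption | exact one_pos

theorem gW_site [Fintype V] [Fintype E] (ends : E → Sym2 V) (α : Setoid V) (S : Set E) {p q : ℝ}
    (hq : 0 < q) (ω : E → Bool) (e : E) (he : e ∈ S)
    (a b : V) (hab : ends e = s(a, b)) :
    gW ends α S p q (Function.update ω e true) * (1 - p) =
      p * gW ends α S p q (Function.update ω e false) *
      (if Conn ends α {e' | e' ∈ S ∧ Function.update ω e false e' = true}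
        (Quotient.mk α a) (Quotient.mk α b) then 1 else q⁻¹) := by
  have hset : {e' | e' ∈ S ∧ Function.update ω e true e' = true} =
      insert e {e' | e' ∈ S ∧ Function.update ω e false e' = true} := by
    ext e'
    by_cases h : e' = e
    · subst h; simp [he]
    · simp [h]
  have hprod : ∀ c : Bool, (∏ e', if e' ∈ S then
      (if Function.update ω e c e' = true then p else 1 - p) else 1) =
      (if c = true then p else 1 - p) *
        ∏ e' ∈ Finset.univ.erase e, (if e' ∈ S then (if ω e' = true then p else 1 - p) else 1) := by
    intro c
    rw [← Finset.mul_prod_erase _ _ (Finset.mem_univ e)]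
    congr 1
    · simp [he]
    · refine Finset.prod_congr rfl fun e' h' => ?_
      rw [Function.update_of_ne (Finset.ne_of_mem_erase h')]
  unfold gW
  rw [hprod, hprod, hset]
  set F := {e' | e' ∈ S ∧ Function.update ω e false e' = true}
  have hins := conn_insert ends α F e a b hab
  rw [if_pos rfl, if_neg (by simp : ¬ (false = true))]
  split_ifs with h1
  · have : connSetoid ends α (insert e F) = connSetoid ends α F := by
      refine Setoid.ext fun x y => ?_
      refine (hins x y).trans ⟨?_, Or.inl⟩
      have Sy : ∀ {x y}, Conn ends α F x y → Conn ends α F y x :=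
        fun h => (connSetoid ends α F).symm h
      have T : ∀ {x y z}, Conn ends α F x y → Conn ends α F y z → Conn ends α F x z :=
        fun h h' => (connSetoid ends α F).trans h h'
      rintro (h | h | h)
      · exact h
      · exact T (T h.1 h1) (Sy h.2)
      · exact T (T h.1 (Sy h1)) (Sy h.2)
    rw [this]
    ring
  · have := card_merge (connSetoid ends α F) (connSetoid ends α (insert e F))
      (Quotient.mk α a) (Quotient.mk α b) h1 hins
    rw [this, pow_succ]
    have := hq.ne'
    field_simp

theorem gW_dom [Fintype V] [Fintype E] (ends : E → Sym2 V) (α : Setoid V) (S : Set E) {p q : ℝ}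
    (hp : p ∈ Set.Ioo (0 : ℝ) 1) (hq : 0 < q) (ω : E → Bool) (e : E) (he : e ∈ S) :
    gW ends α S p q (Function.update ω e true) * (1 - max p (pPrime p q)) ≤
      max p (pPrime p q) * gW ends α S p q (Function.update ω e false) := by
  obtain ⟨a, b, hab⟩ : ∃ a b, ends e = s(a, b) := by
    induction h : ends e using Sym2.ind with | _ a b => exact ⟨a, b, rfl⟩
  have h := gW_site ends α S (p := p) hq ω e he a b hab
  have h0 := gW_pos ends α S hp hq (Function.update ω e false)
  have hp1 := hp.1
  have h2 : 0 < 1 - p := by linarith [hp.2]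
  have hm := le_max_left p (pPrime p q)
  have hm' := le_max_right p (pPrime p q)
  set m := max p (pPrime p q)
  set x := gW ends α S p q (Function.update ω e true)
  set y := gW ends α S p q (Function.update ω e false)
  have hqp : 0 < q * (1 - p) := mul_pos hq h2
  have hm2 : p ≤ m * (p + q * (1 - p)) := by
    unfold pPrime at hm'
    rwa [div_le_iff₀ (by linarith)] at hm'
  split_ifs at h
  · have : x * (1 - m) * (1 - p) ≤ m * y * (1 - p) := by
      have : x * (1 - m) * (1 - p) = p * y * (1 - m) := by
        linear_combination (1 - m) * h
      rw [this]
      nlinarith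
    exact le_of_mul_le_mul_right this h2
  · have h' : x * (1 - p) * q = p * y := by
      rw [h]; field_simp
    have : x * (1 - m) * (q * (1 - p)) ≤ m * y * (q * (1 - p)) := by
      have : x * (1 - m) * (q * (1 - p)) = p * y * (1 - m) := by
        linear_combination (1 - m) * h'
      rw [this]
      nlinarith
    exact le_of_mul_le_mul_right this hqp

/-! ### Local connectivity in a decoupled region -/

/-- vertex connectivity, unwired -/
def EV (ends : E → Sym2 V) (F : Set E) (x y : V) : Prop :=
  Relation.EqvGen (fun a b => ∃ e ∈ F, ends e = s(a, b)) x y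

theorem conn_local (ends : E → Sym2 V) (α : Setoid V) (G F : Set E) (W : Set V)
    (hα : ∀ x y, α.r x y → x ∈ W → x = y)
    (hFW : ∀ e ∈ F, ∀ x ∈ ends e, x ∈ W)
    (hG : ∀ e ∈ G, ∀ x ∈ ends e, x ∈ W → e ∈ F) (x y : V) (hx : x ∈ W) :
    Conn ends α G (Quotient.mk α x) (Quotient.mk α y) ↔ EV ends (F ∩ G) x y := by
  constructor
  · intro h
    have key : ∀ u v, Relation.EqvGen (Step ends α G) u v →
        (∀ x ∈ W, Quotient.mk α x = u → ∃ y ∈ W, Quotient.mk α y = v ∧ EV ends (F ∩ G) x y) ∧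
        (∀ x ∈ W, Quotient.mk α x = v → ∃ y ∈ W, Quotient.mk α y = u ∧ EV ends (F ∩ G) x y) := by
      intro u v h
      induction h with
      | rel u v h =>
        obtain ⟨e, he, h⟩ := h
        obtain ⟨a, b, hab⟩ : ∃ a b, ends e = s(a, b) := by
          induction h : ends e using Sym2.ind with | _ a b => exact ⟨a, b, rfl⟩
        have main : ∀ a b, ends e = s(a, b) → ∀ x ∈ W, Quotient.mk α x = Quotient.mk α a →
            ∃ y ∈ W, Quotient.mk α y = Quotient.mk α b ∧ EV ends (F ∩ G) x y := by
          intro a b hab x hx hxa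
          have : x = a := hα _ _ (Quotient.exact hxa) hx
          subst this
          have hF : e ∈ F := hG e he x (by simp [hab]) hx
          exact ⟨b, hFW e hF b (by simp [hab]), rfl,
            Relation.EqvGen.rel _ _ ⟨e, ⟨hF, he⟩, hab⟩⟩
        rw [hab, Sym2.map_mk, Sym2.eq_iff] at h
        have hba : ends e = s(b, a) := by rw [hab, Sym2.eq_swap]
        rcases h with ⟨rfl, rfl⟩ | ⟨rfl, rfl⟩
        · exact ⟨main a b hab, main b a hba⟩
        · exact ⟨main b a hba, main a b hab⟩
      | refl u =>
        exact ⟨fun x hx h => ⟨x, hx, h, Relation.EqvGen.refl _⟩,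
          fun x hx h => ⟨x, hx, h, Relation.EqvGen.refl _⟩⟩
      | symm u v _ ih => exact ⟨ih.2, ih.1⟩
      | trans u v w _ _ ih1 ih2 =>
        constructor
        · intro x hx h
          obtain ⟨y, hy, h1, h2⟩ := ih1.1 x hx h
          obtain ⟨z, hz, h3, h4⟩ := ih2.1 y hy h1
          exact ⟨z, hz, h3, Relation.EqvGen.trans _ _ _ h2 h4⟩
        · intro x hx h
          obtain ⟨y, hy, h1, h2⟩ := ih2.2 x hx h
          obtain ⟨z, hz, h3, h4⟩ := ih1.2 y hy h1
          exact ⟨z, hz, h3, Relation.EqvGen.trans _ _ _ h2 h4⟩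
    obtain ⟨y', hy', h1, h2⟩ := (key _ _ h).1 x hx rfl
    have : y' = y := hα _ _ (Quotient.exact h1) hy'
    exact this ▸ h2
  · intro h
    have h' : Relation.EqvGen (fun a b => ∃ e ∈ F ∩ G, ends e = s(a, b)) x y := h
    clear h hx
    induction h' with
    | rel x y h =>
      obtain ⟨e, he, h⟩ := h
      exact Relation.EqvGen.rel _ _ ⟨e, he.2, by rw [h, Sym2.map_mk]⟩
    | refl x => exact Relation.EqvGen.refl _
    | symm x y _ ih => exact Relation.EqvGen.symm _ _ ih
    | trans x y z _ _ ih1 ih2 => exact Relation.EqvGen.trans _ _ _ ih1 ih2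

/-- close all edges of `F` -/
def offF (F : Set E) (ω : E → Bool) : E → Bool := fun e => if e ∈ F then false else ω e

/-- close all edges outside `F` -/
def onF (F : Set E) (ω : E → Bool) : E → Bool := fun e => if e ∈ F then ω e else false

theorem gW_factor [Fintype V] [Fintype E] (ends : E → Sym2 V) (α : Setoid V) (S F : Set E)
    (W : Set V) {p q : ℝ} (hp : p ∈ Set.Ioo (0 : ℝ) 1) (hq : 0 < q)
    (hα : ∀ x y, α.r x y → x ∈ W → x = y)
    (hFW : ∀ e ∈ F, ∀ x ∈ ends e, x ∈ W) (hFS : F ⊆ S) :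
    ∀ (n : ℕ) (ω : E → Bool), (Finset.univ.filter fun e => e ∈ F ∧ ω e = true).card = n →
    (∀ e ∈ S, ω e = true → ∀ x ∈ ends e, x ∈ W → e ∈ F) →
    gW ends α S p q ω * gW ends ⊥ F p q (fun _ => false) =
      gW ends α S p q (offF F ω) * gW ends ⊥ F p q (onF F ω) := by
  intro n
  induction n with
  | zero =>
    intro ω hn _
    have h : ∀ e ∈ F, ω e = false := by
      intro e he
      by_contra hc
      have : e ∈ (Finset.univ.filter fun e => e ∈ F ∧ ω e = true) := by
        simpa [he] using hc
      rw [Finset.card_eq_zero.1 hn] at this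
      simp at this
    have h1 : offF F ω = ω := by
      funext e; unfold offF; split_ifs with h'
      · exact (h e h').symm
      · rfl
    have h2 : onF F ω = fun _ => false := by
      funext e; unfold onF; split_ifs with h'
      · exact h e h'
      · rfl
    rw [h1, h2]
  | succ n ih =>
    intro ω hn hω
    obtain ⟨e, he⟩ : (Finset.univ.filter fun e => e ∈ F ∧ ω e = true).Nonempty := by
      rw [← Finset.card_pos]; omega
    simp only [Finset.mem_filter, Finset.mem_univ, true_and] at he
    obtain ⟨heF, heo⟩ := he
    obtain ⟨a, b, hab⟩ : ∃ a b, ends e = s(a, b) := by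
      induction h : ends e using Sym2.ind with | _ a b => exact ⟨a, b, rfl⟩
    set ω0 := Function.update ω e false with hω0
    have hle : ∀ e', ω0 e' = true → ω e' = true := by
      intro e' h
      by_cases h' : e' = e
      · subst h'; exact heo
      · simpa [hω0, h'] using h
    have hup : ω = Function.update ω e true := by rw [← heo]; simp
    have ihω := ih ω0 (by
      have : (Finset.univ.filter fun e' => e' ∈ F ∧ ω0 e' = true) =
          (Finset.univ.filter fun e' => e' ∈ F ∧ ω e' = true).erase e := by
        ext e'
        by_cases h' : e' = e
        · subst h'; simp [hω0]
        · simp [hω0, h']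
      rw [this, Finset.card_erase_of_mem (by simp [heF, heo]), hn]; rfl)
      (fun e' hS ho => hω e' hS (hle e' ho))
    have hoff : offF F ω0 = offF F ω := by
      funext e'; unfold offF
      split_ifs with h'
      · rfl
      · rw [hω0, Function.update_of_ne]; rintro rfl; exact h' heF
    have hon0 : Function.update (onF F ω) e false = onF F ω0 := by
      funext e'
      by_cases h' : e' = e
      · subst h'; simp [onF, hω0]
      · simp [onF, hω0, h']
    have hon1 : Function.update (onF F ω) e true = onF F ω := by
      funext e'
      by_cases h' : e' = e
      · subst h'; simp [onF, heF, heo]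
      · simp [h']
    have s1 := gW_site ends α S (p := p) hq ω e (hFS heF) a b hab
    have s2 := gW_site ends ⊥ F (p := p) hq (onF F ω) e heF a b hab
    rw [← hup, ← hω0] at s1
    rw [hon0, hon1] at s2
    have haW : a ∈ W := hFW e heF a (by simp [hab])
    have c1 := conn_local ends α {e' | e' ∈ S ∧ ω0 e' = true} F W hα hFW
      (fun e' h => hω e' h.1 (hle _ h.2)) a b haW
    have c2 := conn_local ends ⊥ {e' | e' ∈ F ∧ onF F ω0 e' = true} F W
      (fun x y h _ => h) hFW (fun e' h _ _ _ => h.1) a b haW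
    have hsets : F ∩ {e' | e' ∈ S ∧ ω0 e' = true} =
        F ∩ {e' | e' ∈ F ∧ onF F ω0 e' = true} := by
      ext e'
      by_cases h : e' ∈ F
      · simp [onF, h, hFS h]
      · simp [h]
    rw [hsets] at c1
    have c3 := c1.trans c2.symm
    simp only [c3] at s1
    have h2 : 1 - p ≠ 0 := by linarith [hp.2]
    rw [hoff] at ihω
    apply mul_right_cancel₀ h2
    set c : ℝ := if Conn ends ⊥ {e' | e' ∈ F ∧ onF F ω0 e' = true} (Quotient.mk ⊥ a)
      (Quotient.mk ⊥ b) then 1 else q⁻¹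
    linear_combination (gW ends ⊥ F p q (fun _ => false)) * s1 + p * c * ihω
      - gW ends α S p q (offF F ω) * s2

end Helpers

section Abstract

/-- mass of configurations in `B` agreeing with `ξ` on `D` -/
def MM [Fintype E] (w : (E → Bool) → ℝ) (D : Set E) (ξ : E → Bool) (B : Set (E → Bool)) : ℝ :=
  ∑ ω, if (∀ e ∈ D, ω e = ξ e) ∧ ω ∈ B then w ω else 0

theorem agree_insert (D : Set E) (e : E) (he : e ∉ D) (ξ ω : E → Bool) (b : Bool) :
    (∀ e' ∈ insert e D, ω e' = Function.update ξ e b e') ↔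
      (ω e = b ∧ ∀ e' ∈ D, ω e' = ξ e') := by
  constructor
  · intro h
    refine ⟨by simpa using h e (Set.mem_insert _ _), fun e' he' => ?_⟩
    have := h e' (Set.mem_insert_of_mem _ he')
    rwa [Function.update_of_ne] at this
    rintro rfl; exact he he'
  · rintro ⟨h1, h2⟩ e' he'
    rcases he' with rfl | he'
    · simpa using h1
    · rw [Function.update_of_ne]
      · exact h2 e' he'
      · rintro rfl; exact he he'

theorem MM_split [Fintype E] (w : (E → Bool) → ℝ) (D : Set E) (e : E) (he : e ∉ D)
    (ξ : E → Bool) (B : Set (E → Bool)) :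
    MM w D ξ B = MM w (insert e D) (Function.update ξ e true) B +
      MM w (insert e D) (Function.update ξ e false) B := by
  unfold MM
  rw [← Finset.sum_add_distrib]
  refine Finset.sum_congr rfl fun ω _ => ?_
  simp only [agree_insert D e he]
  cases h : ω e <;> simp

theorem MM_nonneg [Fintype E] {w : (E → Bool) → ℝ} (hw : ∀ ω, 0 < w ω) (D : Set E)
    (ξ : E → Bool) (B : Set (E → Bool)) : 0 ≤ MM w D ξ B := by
  unfold MM
  refine Finset.sum_nonneg fun ω _ => ?_
  split_ifs
  · exact (hw ω).le
  · exact le_rfl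

theorem MM_pos [Fintype E] {w : (E → Bool) → ℝ} (hw : ∀ ω, 0 < w ω) (D : Set E)
    (ξ : E → Bool) : 0 < MM w D ξ Set.univ := by
  unfold MM
  refine Finset.sum_pos' (fun ω _ => ?_) ⟨ξ, Finset.mem_univ _, ?_⟩
  · split_ifs
    · exact (hw ω).le
    · exact le_rfl
  · simpa using hw ξ

theorem MM_le [Fintype E] {w : (E → Bool) → ℝ} (hw : ∀ ω, 0 < w ω) (D : Set E)
    (ξ : E → Bool) (B : Set (E → Bool)) : MM w D ξ B ≤ MM w D ξ Set.univ := by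
  unfold MM
  refine Finset.sum_le_sum fun ω _ => ?_
  have := (hw ω).le
  split_ifs with h1 h2 h2
  · exact le_rfl
  · exact absurd ⟨h1.1, Set.mem_univ _⟩ h2
  · exact this
  · exact le_rfl

theorem MM_site [Fintype E] (w : (E → Bool) → ℝ) (D : Set E) (e : E) (he : e ∉ D)
    (ξ : E → Bool) (b : Bool) :
    MM w (insert e D) (Function.update ξ e b) Set.univ =
      ∑ ω, if ω e = true ∧ (∀ e' ∈ D, ω e' = ξ e') then w (Function.update ω e b) else 0 := by
  unfold MM
  simp only [agree_insert D e he, Set.mem_univ, and_true]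
  cases b with
  | true =>
    refine Finset.sum_congr rfl fun ω _ => ?_
    split_ifs with h
    · rw [← h.1]; simp
    · rfl
  | false =>
    refine Finset.sum_bij' (fun ω _ => Function.update ω e (!ω e))
      (fun ω _ => Function.update ω e (!ω e)) (by simp) (by simp) (by simp) (by simp) ?_
    intro ω _
    have hD : (∀ e' ∈ D, Function.update ω e (!ω e) e' = ξ e') ↔ (∀ e' ∈ D, ω e' = ξ e') := by
      refine forall₂_congr fun e' h' => ?_
      rw [Function.update_of_ne]
      rintro rfl; exact he h'
    simp only [hD]
    by_cases h : ω e = false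
    · have : Function.update ω e false = ω := by rw [← h]; simp
      simp [h, this]
    · simp [h]

theorem MM_site_le [Fintype E] (w : (E → Bool) → ℝ) (D : Set E) (e : E) (he : e ∉ D)
    (ξ : E → Bool) (a b : ℝ) (c d : Bool)
    (h : ∀ ω, w (Function.update ω e c) * a ≤ b * w (Function.update ω e d)) :
    MM w (insert e D) (Function.update ξ e c) Set.univ * a ≤
      b * MM w (insert e D) (Function.update ξ e d) Set.univ := by
  rw [MM_site w D e he, MM_site w D e he, Finset.sum_mul, Finset.mul_sum]
  refine Finset.sum_le_sum fun ω _ => ?_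
  split_ifs
  · exact h ω
  · simp

theorem real_step {c c' m f1 f0 f1' f0' g1 g0 : ℝ} (hc : 0 ≤ c) (hc' : 0 ≤ c') (hm : c ≤ m)
    (hm' : c' ≤ m) (hm1 : m ≤ 1) (h11 : |f1 - f1'| ≤ g1) (h01 : |f0 - f1'| ≤ g1)
    (h10 : |f1 - f0'| ≤ g1) (h001 : |f0 - f0'| ≤ g1) (h000 : |f0 - f0'| ≤ g0) :
    |(c * f1 + (1 - c) * f0) - (c' * f1' + (1 - c') * f0')| ≤ m * g1 + (1 - m) * g0 := by
  rw [abs_le] at *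
  rcases le_total c c' with h | h
  · constructor <;>
    nlinarith [mul_le_mul_of_nonneg_left h11.1 hc, mul_le_mul_of_nonneg_left h11.2 hc,
      mul_le_mul_of_nonneg_left h01.1 (sub_nonneg.2 h),
      mul_le_mul_of_nonneg_left h01.2 (sub_nonneg.2 h),
      mul_le_mul_of_nonneg_left h001.1 (sub_nonneg.2 hm'),
      mul_le_mul_of_nonneg_left h001.2 (sub_nonneg.2 hm'),
      mul_le_mul_of_nonneg_left h000.1 (sub_nonneg.2 hm1),
      mul_le_mul_of_nonneg_left h000.2 (sub_nonneg.2 hm1)]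
  · constructor <;>
    nlinarith [mul_le_mul_of_nonneg_left h11.1 hc', mul_le_mul_of_nonneg_left h11.2 hc',
      mul_le_mul_of_nonneg_left h10.1 (sub_nonneg.2 h),
      mul_le_mul_of_nonneg_left h10.2 (sub_nonneg.2 h),
      mul_le_mul_of_nonneg_left h001.1 (sub_nonneg.2 hm),
      mul_le_mul_of_nonneg_left h001.2 (sub_nonneg.2 hm),
      mul_le_mul_of_nonneg_left h000.1 (sub_nonneg.2 hm1),
      mul_le_mul_of_nonneg_left h000.2 (sub_nonneg.2 hm1)]

/-- conditional probability -/
def cP [Fintype E] (w : (E → Bool) → ℝ) (D : Set E) (ξ : E → Bool) (B : Set (E → Bool)) : ℝ :=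
  MM w D ξ B / MM w D ξ Set.univ

theorem cP_split [Fintype E] {w : (E → Bool) → ℝ} (hw : ∀ ω, 0 < w ω) (D : Set E) (e : E)
    (he : e ∉ D) (ξ : E → Bool) (B : Set (E → Bool)) :
    cP w D ξ B =
      (MM w (insert e D) (Function.update ξ e true) Set.univ / MM w D ξ Set.univ) *
        cP w (insert e D) (Function.update ξ e true) B +
      (1 - MM w (insert e D) (Function.update ξ e true) Set.univ / MM w D ξ Set.univ) *
        cP w (insert e D) (Function.update ξ e false) B := by
  unfold cP
  have h := MM_split w D e he ξ B
  have h' := MM_split w D e he ξ Set.univ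
  have p1 := (MM_pos hw (insert e D) (Function.update ξ e true))
  have p2 := (MM_pos hw (insert e D) (Function.update ξ e false))
  rw [h, h']
  have := p1.ne'
  have := p2.ne'
  have := (add_pos p1 p2).ne'
  field_simp
  ring

theorem cP_nonneg [Fintype E] {w : (E → Bool) → ℝ} (hw : ∀ ω, 0 < w ω) (D : Set E)
    (ξ : E → Bool) (B : Set (E → Bool)) : 0 ≤ cP w D ξ B :=
  div_nonneg (MM_nonneg hw D ξ B) (MM_nonneg hw D ξ _)

theorem cP_le_one [Fintype E] {w : (E → Bool) → ℝ} (hw : ∀ ω, 0 < w ω) (D : Set E)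
    (ξ : E → Bool) (B : Set (E → Bool)) : cP w D ξ B ≤ 1 :=
  div_le_one_of_le₀ (MM_le hw D ξ B) (MM_nonneg hw D ξ _)

theorem coef_le [Fintype E] {w : (E → Bool) → ℝ} (hw : ∀ ω, 0 < w ω) (D : Set E) (e : E)
    (he : e ∉ D) (ξ : E → Bool) (m : ℝ)
    (h : ∀ ω, w (Function.update ω e true) * (1 - m) ≤ m * w (Function.update ω e false)) :
    MM w (insert e D) (Function.update ξ e true) Set.univ / MM w D ξ Set.univ ≤ m := by
  rw [div_le_iff₀ (MM_pos hw D ξ), MM_split w D e he ξ Set.univ]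
  have := MM_site_le w D e he ξ (1 - m) m true false h
  linarith

theorem coef_ge [Fintype E] {w : (E → Bool) → ℝ} (hw : ∀ ω, 0 < w ω) (D : Set E) (e : E)
    (he : e ∉ D) (ξ : E → Bool) (m : ℝ)
    (h : ∀ ω, w (Function.update ω e false) * m ≤ (1 - m) * w (Function.update ω e true)) :
    m ≤ MM w (insert e D) (Function.update ξ e true) Set.univ / MM w D ξ Set.univ := by
  rw [le_div_iff₀ (MM_pos hw D ξ), MM_split w D e he ξ Set.univ]
  have := MM_site_le w D e he ξ m (1 - m) false true h
  linarith

theorem ber_pos [Fintype E] {m : ℝ} (h0 : 0 < m) (h1 : m < 1) (ω : E → Bool) :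
    0 < berWeight (fun _ : E => m) ω := by
  unfold berWeight
  refine Finset.prod_pos fun e _ => ?_
  split_ifs
  · exact h0
  · linarith

theorem ber_site [Fintype E] (m : ℝ) (ω : E → Bool) (e : E) :
    berWeight (fun _ : E => m) (Function.update ω e true) * (1 - m) =
      m * berWeight (fun _ : E => m) (Function.update ω e false) := by
  have hprod : ∀ c : Bool, berWeight (fun _ : E => m) (Function.update ω e c) =
      (if c = true then m else 1 - m) *
        ∏ e' ∈ Finset.univ.erase e, (if ω e' = true then m else 1 - m) := by
    intro c
    unfold berWeight
    rw [← Finset.mul_prod_erase _ _ (Finset.mem_univ e)]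
    congr 1
    · simp
    · refine Finset.prod_congr rfl fun e' h' => ?_
      rw [Function.update_of_ne (Finset.ne_of_mem_erase h')]
  rw [hprod, hprod, if_pos rfl, if_neg (by simp)]
  ring

/-- mass of configurations in `B` supported on `F` -/
def RR [Fintype E] (r : (E → Bool) → ℝ) (F : Set E) (B : Set (E → Bool)) : ℝ :=
  ∑ τ : E → Bool, if (∀ e, e ∉ F → τ e = false) ∧ τ ∈ B then r τ else 0

theorem MM_factor [Fintype E] (w r : (E → Bool) → ℝ) (r0 : ℝ) (D F : Set E) (hDF : ∀ e ∈ F, e ∉ D)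
    (ξ : E → Bool) (B : Set (E → Bool))
    (hB : ∀ ω ω' : E → Bool, (∀ e ∈ F, ω e = ω' e) → (ω ∈ B ↔ ω' ∈ B))
    (h : ∀ ω, (∀ e ∈ D, ω e = ξ e) → w ω * r0 = w (offF F ω) * r (onF F ω)) :
    MM w D ξ B * r0 =
      (∑ σ : E → Bool, if (∀ e ∈ D, σ e = ξ e) ∧ (∀ e ∈ F, σ e = false) then w σ else 0) *
      RR r F B := by
  unfold MM RR
  rw [Finset.sum_mul, Finset.sum_mul_sum, ← Finset.sum_product']
  simp only [ite_mul, zero_mul, mul_ite, mul_zero, ← ite_and]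
  rw [← Finset.sum_filter, ← Finset.sum_filter]
  refine Finset.sum_bij' (fun ω _ => (offF F ω, onF F ω))
    (fun x _ => fun e => if e ∈ F then x.2 e else x.1 e) ?_ ?_ ?_ ?_ ?_
  · intro ω hω
    simp only [Finset.mem_filter, Finset.mem_univ, true_and, Finset.mem_product, and_true] at hω ⊢
    refine ⟨⟨fun e he => by simp [onF, he], ?_⟩, fun e he => ?_, fun e he => by simp [offF, he]⟩
    · exact (hB ω _ (fun e he => by simp [onF, he])).1 hω.2
    · have : e ∉ F := fun hF => hDF e hF he
      simp [offF, this, hω.1 e he]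
  · rintro ⟨σ, τ⟩ hx
    simp only [Finset.mem_filter, Finset.mem_univ, true_and, Finset.mem_product, and_true] at hx ⊢
    obtain ⟨⟨h3, h4⟩, h1, h2⟩ := hx
    refine ⟨fun e he => ?_, ?_⟩
    · have : e ∉ F := fun hF => hDF e hF he
      simp [this, h1 e he]
    · exact (hB τ _ (fun e he => by simp [he])).1 h4
  · intro ω _
    funext e
    by_cases he : e ∈ F <;> simp [onF, offF, he]
  · rintro ⟨σ, τ⟩ hx
    simp only [Finset.mem_filter, Finset.mem_univ, true_and, Finset.mem_product, and_true] at hx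
    obtain ⟨⟨h3, h4⟩, h1, h2⟩ := hx
    refine Prod.ext ?_ ?_ <;> funext e <;> by_cases he : e ∈ F
    · simp [offF, he, h2 e he]
    · simp [offF, he]
    · simp [onF, he]
    · simp [onF, he, h3 e he]
  · intro ω hω
    simp only [Finset.mem_filter, Finset.mem_univ, true_and] at hω
    exact h ω hω.1

theorem cP_factor [Fintype E] {w r : (E → Bool) → ℝ} {r0 : ℝ} (hr0 : 0 < r0)
    (hw : ∀ ω, 0 < w ω) (D F : Set E) (hDF : ∀ e ∈ F, e ∉ D)
    (ξ : E → Bool) (B : Set (E → Bool))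
    (hB : ∀ ω ω' : E → Bool, (∀ e ∈ F, ω e = ω' e) → (ω ∈ B ↔ ω' ∈ B))
    (h : ∀ ω, (∀ e ∈ D, ω e = ξ e) → w ω * r0 = w (offF F ω) * r (onF F ω)) :
    cP w D ξ B =
      RR r F B / RR r F Set.univ := by
  have h1 := MM_factor w r r0 D F hDF ξ B hB h
  have h2 := MM_factor w r r0 D F hDF ξ Set.univ (by simp) h
  have hp := mul_pos (MM_pos hw D ξ) hr0
  set K := (∑ σ : E → Bool, if (∀ e ∈ D, σ e = ξ e) ∧ (∀ e ∈ F, σ e = false) then w σ else 0)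
  set R := RR r F B
  set R' := RR r F Set.univ
  rw [h2] at hp
  have hK : K ≠ 0 := left_ne_zero_of_mul hp.ne'
  have hR : R' ≠ 0 := by
    intro h0
    exact hp.ne' (mul_eq_zero_of_right K h0)
  unfold cP
  rw [div_eq_div_iff (MM_pos hw D ξ).ne' hR]
  apply mul_right_cancel₀ hr0.ne'
  apply mul_right_cancel₀ hK
  linear_combination R' * K * h1 - R * K * h2

end Abstract

section Main

/-- explored cluster of the boundary -/
def Clu (ends : E → Sym2 V) (Bd : Set V) (D : Set E) (η : E → Bool) : Set V :=
  {x | ∃ y ∈ Bd, VConn ends {e | e ∈ D ∧ η e = true} x y}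

theorem Clu_mono (ends : E → Sym2 V) (Bd : Set V) {D D' : Set E} {η η' : E → Bool}
    (h : ∀ e ∈ D, e ∈ D' ∧ (η e = true → η' e = true)) :
    Clu ends Bd D η ⊆ Clu ends Bd D' η' := by
  rintro x ⟨y, hy, h'⟩
  refine ⟨y, hy, Relation.ReflTransGen.mono ?_ _ _ h'⟩
  rintro a b ⟨e, he, hab⟩
  exact ⟨e, ⟨(h e he.1).1, (h e he.1).2 he.2⟩, hab⟩

theorem Clu_enter (ends : E → Sym2 V) (VΛ VΔ : Set V) (hΛΔ : VΛ ⊆ VΔ) (F : Set E) (x y : V)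
    (hy : y ∈ bdry ends VΔ) (h : VConn ends F x y) :
    x ∈ VΛ → ∃ z ∈ bdry ends VΛ, VConn ends F z y := by
  have h' : Relation.ReflTransGen (fun a b => ∃ e ∈ F, ends e = s(a, b)) x y := h
  clear h
  induction h' using Relation.ReflTransGen.head_induction_on with
  | refl =>
    intro hyΛ
    obtain ⟨_, e, he, z, hz, hzn⟩ := hy
    exact ⟨y, ⟨hyΛ, e, he, z, hz, fun h => hzn (hΛΔ h)⟩, Relation.ReflTransGen.refl⟩
  | head h1 h2 ih =>
    rename_i a c
    intro ha
    by_cases hc : c ∈ VΛ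
    · exact ih hc
    · refine ⟨a, ⟨ha, ?_⟩, Relation.ReflTransGen.head h1 h2⟩
      obtain ⟨e, _, hab⟩ := h1
      exact ⟨e, by simp [hab], c, by simp [hab], hc⟩

theorem main_induction [Fintype V] [Fintype E]
    (ends : E → Sym2 V) (α β : Setoid V)
    (p q : ℝ) (hp : p ∈ Set.Ioo (0 : ℝ) 1) (hq : 0 < q)
    (VΛ VΔ : Set V) (hΛΔ : VΛ ⊆ VΔ)
    (hα : ∀ x y : V, α.r x y → x ≠ y → x ∉ VΔ \ bdry ends VΔ ∧ y ∉ VΔ \ bdry ends VΔ)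
    (hβ : ∀ x y : V, β.r x y → x ≠ y → x ∈ bdry ends VΔ ∧ y ∈ bdry ends VΔ)
    (m : ℝ) (hm : m = max p (pPrime p q)) (hm0 : 0 < m) (hm1 : m < 1)
    (B Ev : Set (E → Bool))
    (hB : ∀ ω ω' : E → Bool, (∀ e ∈ edgesIn ends VΛ, ω e = ω' e) → (ω ∈ B ↔ ω' ∈ B))
    (hEv : Ev = {ω | ∃ x ∈ bdry ends VΛ, ∃ y ∈ bdry ends VΔ,
            VConn ends {e | e ∈ edgesIn ends VΔ ∧ ω e = true} x y}) :
    ∀ (n : ℕ) (D : Set E) (ξ ξ' η : E → Bool), Set.ncard Dᶜ = n → D ⊆ edgesIn ends VΔ →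
      (∀ e ∈ D, ξ e = true → η e = true) → (∀ e ∈ D, ξ' e = true → η e = true) →
      (∀ e ∈ D, ∃ x ∈ ends e, x ∈ Clu ends (bdry ends VΔ) D η) →
      |cP (gW ends α Set.univ p q) D ξ B - cP (gW ends β (edgesIn ends VΔ) p q) D ξ' B| ≤
        cP (berWeight fun _ : E => m) D η Ev := by
  intro n
  have hw1 := gW_pos ends α Set.univ hp hq
  have hw2 := gW_pos ends β (edgesIn ends VΔ) hp hq
  have hwb := fun ω => ber_pos (E := E) hm0 hm1 ω
  induction n using Nat.strong_induction_on with | _ n ih => ?_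
  intro D ξ ξ' η hn hD hξ hξ' hC
  by_cases hex : ∃ e ∈ edgesIn ends VΔ, e ∉ D ∧ ∃ x ∈ ends e, x ∈ Clu ends (bdry ends VΔ) D η
  · obtain ⟨e, heΔ, heD, x, hxe, hxC⟩ := hex
    have step : ∀ (b b' c : Bool), (b = true → c = true) → (b' = true → c = true) →
        |cP (gW ends α Set.univ p q) (insert e D) (Function.update ξ e b) B -
          cP (gW ends β (edgesIn ends VΔ) p q) (insert e D) (Function.update ξ' e b') B| ≤
          cP (berWeight fun _ : E => m) (insert e D) (Function.update η e c) Ev := by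
      intro b b' c hb hb'
      have hmono : Clu ends (bdry ends VΔ) D η ⊆
          Clu ends (bdry ends VΔ) (insert e D) (Function.update η e c) := by
        apply Clu_mono
        intro e' he'
        refine ⟨Set.mem_insert_of_mem _ he', fun h => ?_⟩
        rwa [Function.update_of_ne]
        rintro rfl; exact heD he'
      refine ih _ ?_ (insert e D) _ _ _ rfl ?_ ?_ ?_ ?_
      · rw [← hn]
        apply Set.ncard_lt_ncard _ (Set.toFinite _)
        refine ⟨fun a ha h => ha (Set.mem_insert_of_mem _ h), fun h => ?_⟩
        exact h (show e ∈ Dᶜ from heD) (Set.mem_insert _ _)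
      · rintro a (rfl | ha)
        · exact heΔ
        · exact hD ha
      · rintro a (rfl | ha)
        · simpa using hb
        · have : a ≠ e := by rintro rfl; exact heD ha
          simpa [this] using hξ a ha
      · rintro a (rfl | ha)
        · simpa using hb'
        · have : a ≠ e := by rintro rfl; exact heD ha
          simpa [this] using hξ' a ha
      · rintro a (rfl | ha)
        · exact ⟨x, hxe, hmono hxC⟩
        · obtain ⟨z, hz, hz'⟩ := hC a ha
          exact ⟨z, hz, hmono hz'⟩
    have k1 := coef_le hw1 D e heD ξ m
      (fun ω => by rw [hm]; exact gW_dom ends α Set.univ hp hq ω e (Set.mem_univ _))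
    have k2 := coef_le hw2 D e heD ξ' m
      (fun ω => by rw [hm]; exact gW_dom ends β (edgesIn ends VΔ) hp hq ω e heΔ)
    have k3 := le_antisymm (coef_le hwb D e heD η m (fun ω => (ber_site m ω e).le))
      (coef_ge hwb D e heD η m (fun ω => by linarith [ber_site m ω e]))
    rw [cP_split hw1 D e heD ξ B, cP_split hw2 D e heD ξ' B, cP_split hwb D e heD η Ev, k3]
    exact real_step (div_nonneg (MM_nonneg hw1 _ _ _) (MM_nonneg hw1 _ _ _))
      (div_nonneg (MM_nonneg hw2 _ _ _) (MM_nonneg hw2 _ _ _)) k1 k2 hm1.le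
      (step true true true (by simp) (by simp)) (step false true true (by simp) (by simp))
      (step true false true (by simp) (by simp)) (step false false true (by simp) (by simp))
      (step false false false (by simp) (by simp))
  · by_cases hmeet : ∃ x ∈ bdry ends VΛ, x ∈ Clu ends (bdry ends VΔ) D η
    · obtain ⟨x, hx, y, hy, hxy⟩ := hmeet
      have : cP (berWeight fun _ : E => m) D η Ev = 1 := by
        unfold cP
        have : MM (berWeight fun _ : E => m) D η Ev = MM (berWeight fun _ : E => m) D η Set.univ := by
          unfold MM
          refine Finset.sum_congr rfl fun ω _ => ?_
          congr 1
          simp only [Set.mem_univ, and_true, eq_iff_iff, and_iff_left_iff_imp]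
          intro hω
          rw [hEv]
          refine ⟨x, hx, y, hy, Relation.ReflTransGen.mono ?_ _ _ hxy⟩
          rintro a b ⟨e, he, hab⟩
          exact ⟨e, ⟨hD he.1, by rw [hω e he.1]; exact he.2⟩, hab⟩
        rw [this, div_self (MM_pos hwb D η).ne']
      rw [this, abs_le]
      have a1 := cP_nonneg hw1 D ξ B
      have a2 := cP_le_one hw1 D ξ B
      have a3 := cP_nonneg hw2 D ξ' B
      have a4 := cP_le_one hw2 D ξ' B
      constructor <;> linarith
    · have hBdC : bdry ends VΔ ⊆ Clu ends (bdry ends VΔ) D η :=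
        fun y hy => ⟨y, hy, Relation.ReflTransGen.refl⟩
      set C := Clu ends (bdry ends VΔ) D η with hCdef
      set W : Set V := VΔ \ C with hW
      set F : Set E := {e | e ∈ edgesIn ends VΔ ∧ e ∉ D} with hF
      have hFW : ∀ e ∈ F, ∀ x ∈ ends e, x ∈ W := by
        intro e he x hx
        exact ⟨he.1 x hx, fun hxC => hex ⟨e, he.1, he.2, x, hx, hxC⟩⟩
      have hopen : ∀ ζ : E → Bool, (∀ e ∈ D, ζ e = true → η e = true) → ∀ ω : E → Bool,
          (∀ e ∈ D, ω e = ζ e) → ∀ e, ω e = true → ∀ x ∈ ends e, x ∈ W → e ∈ F := by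
        intro ζ hζ ω hω e heo x hx hxW
        have heΔ : e ∈ edgesIn ends VΔ := by
          intro y hy
          by_contra hyn
          exact hxW.2 (hBdC ⟨hxW.1, e, hx, y, hy, hyn⟩)
        refine ⟨heΔ, fun heD => ?_⟩
        obtain ⟨z, hz, hzC⟩ := hC e heD
        have hη : η e = true := hζ e heD (by rw [← hω e heD]; exact heo)
        apply hxW.2
        by_cases hxz : x = z
        · rw [hxz]; exact hzC
        · have hez : ends e = s(x, z) := ((Sym2.mem_and_mem_iff hxz).1 ⟨hx, hz⟩)
          obtain ⟨y, hy, hzy⟩ := hzC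
          exact ⟨y, hy, Relation.ReflTransGen.head ⟨e, ⟨heD, hη⟩, hez⟩ hzy⟩
      have hΛF : edgesIn ends VΛ ⊆ F := by
        intro e he
        refine ⟨fun x hx => hΛΔ (he x hx), fun heD => ?_⟩
        obtain ⟨z, hz, y, hy, hzy⟩ := hC e heD
        obtain ⟨z', hz', h'⟩ := Clu_enter ends VΛ VΔ hΛΔ _ z y hy hzy (he z hz)
        exact hmeet ⟨z', hz', y, hy, h'⟩
      have hBF : ∀ ω ω' : E → Bool, (∀ e ∈ F, ω e = ω' e) → (ω ∈ B ↔ ω' ∈ B) :=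
        fun ω ω' h => hB ω ω' fun e he => h e (hΛF he)
      have hαW : ∀ x y, α.r x y → x ∈ W → x = y := by
        intro x y h hx
        by_contra hne
        exact (hα x y h hne).1 ⟨hx.1, fun hb => hx.2 (hBdC hb)⟩
      have hβW : ∀ x y, β.r x y → x ∈ W → x = y := by
        intro x y h hx
        by_contra hne
        exact hx.2 (hBdC (hβ x y h hne).1)
      have r0 := gW_pos ends ⊥ F hp hq (fun _ => false)
      have e1 := cP_factor (r := gW ends ⊥ F p q) r0 hw1 D F (fun e he => he.2) ξ B hBF
        (fun ω hω => gW_factor ends α Set.univ F W hp hq hαW hFW (Set.subset_univ _) _ ω rfl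
          (fun e _ ho => hopen ξ hξ ω hω e ho))
      have e2 := cP_factor (r := gW ends ⊥ F p q) r0 hw2 D F (fun e he => he.2) ξ' B hBF
        (fun ω hω => gW_factor ends β (edgesIn ends VΔ) F W hp hq hβW hFW (fun e he => he.1) _ ω rfl
          (fun e _ ho => hopen ξ' hξ' ω hω e ho))
      rw [e1, e2, sub_self, abs_zero]
      exact cP_nonneg hwb D η Ev

theorem cP_empty [Fintype E] (w : (E → Bool) → ℝ) (ξ : E → Bool) (B : Set (E → Bool)) :
    cP w ∅ ξ B = probOf w B := by
  unfold cP probOf MM massOf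
  simp [Finset.sum_filter]

theorem fk_prod [Fintype E] (p : ℝ) (ω : E → Bool) :
    p ^ (Finset.univ.filter fun e => ω e = true).card *
    (1 - p) ^ (Finset.univ.filter fun e => ω e = false).card =
    ∏ e, if ω e = true then p else 1 - p := by
  rw [Finset.prod_ite, Finset.prod_const, Finset.prod_const]
  simp

theorem fkWeight_eq [Fintype E] (ends : E → Sym2 V) (α : Setoid V) (p q : ℝ) :
    fkWeight ends α p q = gW ends α Set.univ p q := by
  funext ω
  unfold fkWeight gW numComponents
  rw [fk_prod]
  simp

theorem fkWeight_sub [Fintype E] (ends : E → Sym2 V) (β : Setoid V) (p q : ℝ) (S : Set E)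
    (ω : E → Bool) :
    fkWeight (fun e : ↥S => ends e.1) β p q (fun e => ω e.1) = gW ends β S p q ω := by
  unfold fkWeight gW numComponents
  rw [fk_prod]
  congr 1
  · rw [← Finset.prod_filter]
    exact (Finset.prod_subtype (Finset.univ.filter (· ∈ S)) (by simp)
      (fun e => if ω e = true then p else 1 - p)).symm
  · have : connSetoid (fun e : ↥S => ends e.1) β {e | ω e.1 = true} =
        connSetoid ends β {e | e ∈ S ∧ ω e = true} := by
      unfold connSetoid
      congr 1
      funext x y
      unfold Step
      simp
      tauto
    rw [this]

theorem massOf_sub [Fintype E] (S : Set E) (h : (↥S → Bool) → ℝ) (B : Set (↥S → Bool)) :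
    massOf (fun ω : E → Bool => h (fun e => ω e.1)) {ω | (fun e : ↥S => ω e.1) ∈ B} =
      Fintype.card ({e // e ∉ S} → Bool) * massOf h B := by
  unfold massOf
  rw [Finset.sum_filter, Finset.sum_filter]
  refine (Fintype.sum_equiv (Equiv.piEquivPiSubtypeProd (· ∈ S) (fun _ => Bool)) _
    (fun x => if x.1 ∈ B then h x.1 else 0) (fun ω => rfl)).trans ?_
  rw [Fintype.sum_prod_type]
  simp only [Finset.sum_const, Finset.card_univ, nsmul_eq_mul]
  rw [← Finset.mul_sum]

theorem probOf_sub [Fintype E] (S : Set E) (h : (↥S → Bool) → ℝ) (B : Set (↥S → Bool)) :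
    probOf (fun ω : E → Bool => h (fun e => ω e.1)) {ω | (fun e : ↥S => ω e.1) ∈ B} =
      probOf h B := by
  unfold probOf
  have h1 := massOf_sub S h B
  have h2 := massOf_sub S h Set.univ
  have h3 : {ω : E → Bool | (fun e : ↥S => ω e.1) ∈ (Set.univ : Set (↥S → Bool))} = Set.univ := by
    ext; simp
  rw [h3] at h2
  rw [h1, h2, mul_div_mul_left]
  exact_mod_cast Fintype.card_ne_zero

end Main

/-- **Finite-volume comparison of FK measures with different boundary conditions**
(inequality (2.3) of the uniqueness proof).  The measure with boundary condition `β` on the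
subgraph `(V_Δ, E_Δ)` is modeled with vertex type `V` and edge type `↥E_Δ`; the wiring `β`
is an equivalence relation on `V` whose nontrivial classes are contained in `∂V_Δ` (extra
isolated vertices only multiply all FK weights by a constant power of `q`, which cancels in
the normalization). -/
theorem finite_volume_comparison
    {V E : Type*} [Fintype V] [Fintype E]
    (ends : E → Sym2 V) (α β : Setoid V)
    (p q : ℝ) (hp : p ∈ Set.Ioo (0 : ℝ) 1) (hq : 0 < q)
    (VΛ VΔ : Set V) (hΛΔ : VΛ ⊆ VΔ) (hΛ : VΛ.Nonempty)
    (hα : ∀ x y : V, α.r x y → x ≠ y → x ∉ VΔ \ bdry ends VΔ ∧ y ∉ VΔ \ bdry ends VΔ)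
    (hβ : ∀ x y : V, β.r x y → x ≠ y → x ∈ bdry ends VΔ ∧ y ∈ bdry ends VΔ)
    (A : Set (↥(edgesIn ends VΛ) → Bool)) :
    |fkProb ends α p q
        {ω | (fun e : ↥(edgesIn ends VΛ) => ω e.1) ∈ A}
      - fkProb (fun e : ↥(edgesIn ends VΔ) => ends e.1) β p q
          {ω | (fun e : ↥(edgesIn ends VΛ) => ω ⟨e.1, fun x hx => hΛΔ (e.2 x hx)⟩) ∈ A}|
      ≤ berProb (fun _ : E => max p (pPrime p q))
          {ω | ∃ x ∈ bdry ends VΛ, ∃ y ∈ bdry ends VΔ,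
            VConn ends {e | e ∈ edgesIn ends VΔ ∧ ω e = true} x y} := by
  have hp1 := hp.1
  have h2 : 0 < 1 - p := by linarith [hp.2]
  have hqp : 0 < q * (1 - p) := mul_pos hq h2
  have hm0 : 0 < max p (pPrime p q) := lt_max_of_lt_left hp1
  have hm1 : max p (pPrime p q) < 1 := by
    refine max_lt hp.2 ?_
    unfold pPrime
    rw [div_lt_one (by linarith)]
    linarith
  have key := main_induction ends α β p q hp hq VΛ VΔ hΛΔ hα hβ _ rfl hm0 hm1
    {ω | (fun e : ↥(edgesIn ends VΛ) => ω e.1) ∈ A} _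
    (fun ω ω' h => by
      have : (fun e : ↥(edgesIn ends VΛ) => ω e.1) = (fun e : ↥(edgesIn ends VΛ) => ω' e.1) :=
        funext fun e => h e.1 e.2
      simp only [Set.mem_ofPred_eq, this]) rfl _ ∅ (fun _ => false) (fun _ => false)
      (fun _ => false) rfl (Set.empty_subset _) (by simp) (by simp) (by simp)
  rw [cP_empty, cP_empty, cP_empty] at key
  have e2 := probOf_sub (edgesIn ends VΔ) (fkWeight (fun e : ↥(edgesIn ends VΔ) => ends e.1) β p q)
    {ω | (fun e : ↥(edgesIn ends VΛ) => ω ⟨e.1, fun x hx => hΛΔ (e.2 x hx)⟩) ∈ A}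
  have e3 : (fun ω : E → Bool => fkWeight (fun e : ↥(edgesIn ends VΔ) => ends e.1) β p q
      (fun e => ω e.1)) = gW ends β (edgesIn ends VΔ) p q :=
    funext fun ω => fkWeight_sub ends β p q (edgesIn ends VΔ) ω
  rw [e3] at e2
  have e4 : probOf (gW ends β (edgesIn ends VΔ) p q)
      {ω | (fun e : ↥(edgesIn ends VΛ) => ω e.1) ∈ A} =
      fkProb (fun e : ↥(edgesIn ends VΔ) => ends e.1) β p q
          {ω | (fun e : ↥(edgesIn ends VΛ) => ω ⟨e.1, fun x hx => hΛΔ (e.2 x hx)⟩) ∈ A} := by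
    unfold fkProb
    convert e2 using 2
    ext ω
    exact Iff.rfl
  rw [e4, ← fkWeight_eq] at key
  exact key

end FKPaper
end
end
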